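/- Let α > 0, d ≥ 1, ℓ = ⌊α⌋⁻, let A ⊂ ℝ^d be any finite set of distinct points with K_{A,A} invertible, and let K̃(x₁, x₂) = K(x₁, x₂) − K_{x₁,A} K_{A,A}⁻¹ K_{A,x₂}. There exist constants C > 0 and δ ∈ (0,1), depending only on α and d (in particular, independent of A), such that for every multi-index k with |k| = ℓ, every x ∈ ℝ^d and every h ∈ ℝ^d with 0 < ‖h‖₂ ≤ δ: |K̃^{(k,k)}(x, x) − K̃^{(k,k)}(x, x+h) − K̃^{(k,k)}(x+h, x) + K̃^{(k,k)}(x+h, x+h)| ≤ C ‖h‖₂^{2(α−ℓ)} if α ∉ ℕ, and ≤ C ‖h‖₂² ln(1/‖h‖₂) if α ∈ ℕ. -/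

import Mathlib

open Matrix MeasureTheory

noncomputable section

/-- The Matérn function with regularity `α` on ℝ^d (Fourier normalization):
`K_α(x) = ∫ cos⟨x,ξ⟩ (1+‖ξ‖₂²)^{-(α+d/2)} dξ`. -/
def matern (α : ℝ) (d : ℕ) (x : Fin d → ℝ) : ℝ :=
  ∫ ξ : Fin d → ℝ, Real.cos (∑ j, x j * ξ j) * (1 + ∑ j, ξ j ^ 2) ^ (-(α + (d : ℝ) / 2))

/-- `⌊α⌋⁻`, the largest integer strictly smaller than `α` (for `α > 0`). -/
def lbelow (α : ℝ) : ℕ := Nat.ceil α - 1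

/-- `α` is a (nonnegative) integer. -/
def IsNatVal (α : ℝ) : Prop := ∃ n : ℕ, α = n

/-- The Euclidean norm `‖x‖₂` on ℝ^d. -/
def nrm {d : ℕ} (x : Fin d → ℝ) : ℝ := Real.sqrt (∑ j, x j ^ 2)

/-- Partial derivative in the `j`-th coordinate. -/
def pder (d : ℕ) (j : Fin d) (f : (Fin d → ℝ) → ℝ) : (Fin d → ℝ) → ℝ :=
  fun x => fderiv ℝ f x (Pi.single j 1)

/-- The iterated partial derivative `∂^k` associated with a multi-index `k ∈ ℕ^d`. -/
def mder (d : ℕ) (k : Fin d → ℕ) (f : (Fin d → ℝ) → ℝ) : (Fin d → ℝ) → ℝ :=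
  (List.finRange d).foldr (fun j g => (pder d j)^[k j] g) f

/-- Mixed derivative `F^{(k₁,k₂)}(x₁,x₂) = ∂^{k₁}_{x₁} ∂^{k₂}_{x₂} F(x₁,x₂)`. -/
def mder2 (d : ℕ) (k₁ k₂ : Fin d → ℕ) (F : (Fin d → ℝ) → (Fin d → ℝ) → ℝ)
    (x₁ x₂ : Fin d → ℝ) : ℝ :=
  mder d k₁ (fun y => mder d k₂ (F y) x₂) x₁

/-- The Matérn kernel matrix `K_{A,A} = (K(w_i, w_j))_{i,j}`. -/
def maternMat (α : ℝ) (d : ℕ) {n : ℕ} (w : Fin n → Fin d → ℝ) :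
    Matrix (Fin n) (Fin n) ℝ :=
  Matrix.of fun i j => matern α d (w i - w j)

/-- The Matérn kernel column vector `K_{A,x} = (K(w_i, x))_i`. -/
def maternVec (α : ℝ) (d : ℕ) {n : ℕ} (w : Fin n → Fin d → ℝ) (x : Fin d → ℝ) :
    Fin n → ℝ :=
  fun i => matern α d (w i - x)

/-- The conditional kernel `K̃(x₁,x₂) = K(x₁,x₂) − K_{x₁,A} K_{A,A}⁻¹ K_{A,x₂}`. -/
def condK (α : ℝ) (d : ℕ) {n : ℕ} (w : Fin n → Fin d → ℝ) (x₁ x₂ : Fin d → ℝ) : ℝ :=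
  matern α d (x₁ - x₂) -
    maternVec α d w x₁ ⬝ᵥ ((maternMat α d w)⁻¹ *ᵥ maternVec α d w x₂)

/-- The character `ξ ↦ e^{i⟨x,ξ⟩}` of `ℝ^d`. -/
def phase {d : ℕ} (x ξ : Fin d → ℝ) : ℂ :=
  Complex.exp (Complex.I * ((∑ j, x j * ξ j : ℝ) : ℂ))

/-- The real part of the Fourier transform of `g μ`. -/
def reFourier {d : ℕ} (μ : Measure (Fin d → ℝ)) (g : (Fin d → ℝ) → ℂ) (x : Fin d → ℝ) : ℝ :=
  ∫ ξ, (g ξ * phase x ξ).re ∂μ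

/-- `g` is continuous with an integrable absolute moment of order `N`. -/
def HasMoment {d : ℕ} (μ : Measure (Fin d → ℝ)) (N : ℕ) (g : (Fin d → ℝ) → ℂ) : Prop :=
  Continuous g ∧ Integrable (fun ξ => (1 + ‖ξ‖) ^ N * ‖g ξ‖) μ

/-- The Fourier symbol `(iξ)^k` of `∂^k`. -/
def symbol {d : ℕ} (k : Fin d → ℕ) (ξ : Fin d → ℝ) : ℂ :=
  ∏ j, (Complex.I * (ξ j : ℂ)) ^ k j

theorem continuous_phase {d : ℕ} (x : Fin d → ℝ) : Continuous (phase x) := by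
  unfold phase; fun_prop

theorem norm_phase {d : ℕ} (x ξ : Fin d → ℝ) : ‖phase x ξ‖ = 1 := by
  unfold phase; rw [mul_comm]; exact Complex.norm_exp_ofReal_mul_I _

theorem phase_sub {d : ℕ} (x y ξ : Fin d → ℝ) :
    phase (x - y) ξ = phase x ξ * (starRingEnd ℂ) (phase y ξ) := by
  unfold phase
  rw [← Complex.exp_conj, ← Complex.exp_add]
  congr 1
  simp [sub_mul, Finset.sum_sub_distrib]
  ring

theorem phase_re {d : ℕ} (x ξ : Fin d → ℝ) : (phase x ξ).re = Real.cos (∑ j, x j * ξ j) := by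
  unfold phase; rw [mul_comm, Complex.exp_ofReal_mul_I_re]

theorem continuous_symbol {d : ℕ} (k : Fin d → ℕ) : Continuous (symbol k) := by
  unfold symbol; fun_prop

theorem norm_symbol_le {d : ℕ} (k : Fin d → ℕ) (ξ : Fin d → ℝ) :
    ‖symbol k ξ‖ ≤ ‖ξ‖ ^ (∑ j, k j) := by
  unfold symbol
  rw [norm_prod, ← Finset.prod_pow_eq_pow_sum]
  refine Finset.prod_le_prod (fun _ _ => norm_nonneg _) fun j _ => ?_
  rw [norm_pow, norm_mul, Complex.norm_I, one_mul, Complex.norm_real]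
  exact pow_le_pow_left₀ (norm_nonneg _) (norm_le_pi_norm ξ j) _

namespace HasMoment

variable {d : ℕ} {μ : Measure (Fin d → ℝ)} {N : ℕ} {g : (Fin d → ℝ) → ℂ}

theorem mono {M : ℕ} (hg : HasMoment μ N g) (h : M ≤ N) : HasMoment μ M g := by
  refine ⟨hg.1, hg.2.mono' ?_ (Filter.Eventually.of_forall fun ξ => ?_)⟩
  · have := hg.1; exact Continuous.aestronglyMeasurable (by fun_prop)
  · rw [Real.norm_of_nonneg (by positivity)]
    gcongr
    linarith [norm_nonneg ξ]

theorem mul_of_norm_le {M : ℕ} {p : (Fin d → ℝ) → ℂ} (hg : HasMoment μ (N + M) g)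
    (hp : Continuous p) (hle : ∀ ξ, ‖p ξ‖ ≤ (1 + ‖ξ‖) ^ M) :
    HasMoment μ N (fun ξ => p ξ * g ξ) := by
  have hc := hg.1
  refine ⟨by fun_prop, hg.2.mono' (Continuous.aestronglyMeasurable (by fun_prop))
    (Filter.Eventually.of_forall fun ξ => ?_)⟩
  rw [Real.norm_of_nonneg (by positivity), norm_mul, pow_add, mul_assoc]
  gcongr
  exact hle ξ

theorem sub_sum {n : ℕ} {g' : Fin n → (Fin d → ℝ) → ℂ} (hg : HasMoment μ N g)
    (hg' : ∀ i, HasMoment μ N (g' i)) (c : Fin n → ℝ) :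
    HasMoment μ N (fun ξ => g ξ - ∑ i, (c i : ℂ) * g' i ξ) := by
  have hc := hg.1
  have hc' := fun i => (hg' i).1
  refine ⟨by fun_prop, (hg.2.add (integrable_finsetSum Finset.univ
    fun i _ => (hg' i).2.const_mul |c i|)).mono' (Continuous.aestronglyMeasurable (by fun_prop))
    (Filter.Eventually.of_forall fun ξ => ?_)⟩
  rw [Real.norm_of_nonneg (by positivity)]
  simp only [Pi.add_apply]
  calc (1 + ‖ξ‖) ^ N * ‖g ξ - ∑ i, (c i : ℂ) * g' i ξ‖
      ≤ (1 + ‖ξ‖) ^ N * (‖g ξ‖ + ∑ i, |c i| * ‖g' i ξ‖) := by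
        gcongr
        have hsum := norm_sum_le Finset.univ fun i => (c i : ℂ) * g' i ξ
        simp only [norm_mul, Complex.norm_real, Real.norm_eq_abs] at hsum
        linarith [norm_sub_le (g ξ) (∑ i, (c i : ℂ) * g' i ξ)]
    _ = _ := by
        rw [mul_add, Finset.mul_sum]
        congr 1
        exact Finset.sum_congr rfl fun i _ => by ring

theorem integrable_re (hg : HasMoment μ N g) (x : Fin d → ℝ) :
    Integrable (fun ξ => (g ξ * phase x ξ).re) μ := by
  have h0 := (hg.mono (Nat.zero_le N)).2
  have hc := hg.1
  have hp := continuous_phase x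
  refine h0.mono' (Continuous.aestronglyMeasurable (by fun_prop))
    (Filter.Eventually.of_forall fun ξ => ?_)
  refine (Complex.abs_re_le_norm _).trans ?_
  simp [norm_phase]

theorem reFourier_sub_sum {n : ℕ} {g' : Fin n → (Fin d → ℝ) → ℂ} (hg : HasMoment μ N g)
    (hg' : ∀ i, HasMoment μ N (g' i)) (c : Fin n → ℝ) (x : Fin d → ℝ) :
    reFourier μ (fun ξ => g ξ - ∑ i, (c i : ℂ) * g' i ξ) x =
      reFourier μ g x - ∑ i, c i * reFourier μ (g' i) x := by
  unfold reFourier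
  simp_rw [← integral_const_mul]
  rw [← integral_finsetSum _ fun i _ => ((hg' i).integrable_re x).const_mul _,
    ← integral_sub (hg.integrable_re x)
      (integrable_finsetSum _ fun i _ => ((hg' i).integrable_re x).const_mul _)]
  refine integral_congr_ae (Filter.Eventually.of_forall fun ξ => ?_)
  simp only [sub_mul, Finset.sum_mul, Complex.sub_re, Complex.re_sum, mul_assoc,
    Complex.re_ofReal_mul]

theorem pder_reFourier (hg : HasMoment μ (N + 1) g) (j : Fin d) :
    pder d j (reFourier μ g) = reFourier μ (fun ξ => Complex.I * (ξ j : ℂ) * g ξ) := by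
  funext x
  have hc := hg.1
  let L : (Fin d → ℝ) → (Fin d → ℝ) →L[ℝ] ℝ := fun ξ =>
    ∑ i, ξ i • ContinuousLinearMap.proj (R := ℝ) (φ := fun _ : Fin d => ℝ) i
  have hLapp : ∀ ξ v, L ξ v = ∑ i, v i * ξ i := fun ξ v => by
    simp [L, mul_comm]
  have hLc : Continuous L := by
    simp only [L]
    fun_prop
  have hLn : ∀ ξ, ‖L ξ‖ ≤ d * ‖ξ‖ := fun ξ => by
    refine ContinuousLinearMap.opNorm_le_bound _ (by positivity) fun v => ?_
    rw [hLapp]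
    refine (norm_sum_le _ _).trans ?_
    calc ∑ i, ‖v i * ξ i‖ ≤ ∑ _i : Fin d, ‖v‖ * ‖ξ‖ := by
          refine Finset.sum_le_sum fun i _ => ?_
          rw [norm_mul]
          gcongr
          exacts [norm_le_pi_norm v i, norm_le_pi_norm ξ i]
      _ = d * ‖ξ‖ * ‖v‖ := by simp; ring
  let F' : (Fin d → ℝ) → (Fin d → ℝ) → (Fin d → ℝ) →L[ℝ] ℝ := fun y ξ =>
    (Complex.I * g ξ * phase y ξ).re • L ξ
  have hF'n : ∀ y ξ, ‖F' y ξ‖ ≤ d * ((1 + ‖ξ‖) ^ (N + 1) * ‖g ξ‖) := fun y ξ => by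
    simp only [F', norm_smul]
    have h1 : ‖(Complex.I * g ξ * phase y ξ).re‖ ≤ ‖g ξ‖ :=
      (Complex.abs_re_le_norm _).trans (by simp [norm_phase])
    have h2 : ‖ξ‖ ≤ (1 + ‖ξ‖) ^ (N + 1) :=
      (by linarith : ‖ξ‖ ≤ 1 + ‖ξ‖).trans
        (le_self_pow₀ (by linarith [norm_nonneg ξ]) (by omega))
    calc _ ≤ ‖g ξ‖ * (d * ‖ξ‖) := mul_le_mul h1 (hLn ξ) (norm_nonneg _) (norm_nonneg _)
      _ ≤ ‖g ξ‖ * (d * (1 + ‖ξ‖) ^ (N + 1)) := by gcongr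
      _ = _ := by ring
  have hF'c : ∀ y, Continuous (F' y) := fun y => by
    have := continuous_phase y
    simp only [F']
    fun_prop
  have hbound : Integrable (fun ξ => d * ((1 + ‖ξ‖) ^ (N + 1) * ‖g ξ‖)) μ := hg.2.const_mul _
  have hF'i : Integrable (F' x) μ := hbound.mono' (hF'c x).aestronglyMeasurable
    (Filter.Eventually.of_forall (hF'n x))
  have key : HasFDerivAt (reFourier μ g) (∫ ξ, F' x ξ ∂μ) x := by
    refine hasFDerivAt_integral_of_dominated_of_fderiv_le (s := Set.univ) Filter.univ_mem
      (Filter.Eventually.of_forall fun y => (hg.integrable_re y).aestronglyMeasurable)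
      (hg.integrable_re x) (hF'c x).aestronglyMeasurable
      (Filter.Eventually.of_forall fun ξ y _ => hF'n y ξ) hbound
      (Filter.Eventually.of_forall fun ξ y _ => ?_)
    have h1 : HasFDerivAt (fun z => ∑ i, z i * ξ i) (L ξ) y := by
      have := (L ξ).hasFDerivAt (x := y)
      simpa only [funext (hLapp ξ)] using this
    have h2 : HasDerivAt (fun t : ℝ => (g ξ * Complex.exp (Complex.I * (t : ℂ))).re)
        (Complex.I * g ξ * phase y ξ).re (∑ i, y i * ξ i) := by
      have h3 : HasDerivAt (fun t : ℝ => g ξ * Complex.exp (Complex.I * (t : ℂ)))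
          (Complex.I * g ξ * phase y ξ) (∑ i, y i * ξ i) := by
        have h4 := ((hasDerivAt_id (∑ i, y i * ξ i)).ofReal_comp.const_mul
          Complex.I).cexp.const_mul (g ξ)
        simp only [id, Complex.ofReal_one] at h4
        refine h4.congr_deriv ?_
        simp only [phase]
        ring
      exact Complex.reCLM.hasFDerivAt.comp_hasDerivAt _ h3
    exact h2.comp_hasFDerivAt y h1
  rw [pder, key.fderiv, ContinuousLinearMap.integral_apply hF'i]
  refine integral_congr_ae (Filter.Eventually.of_forall fun ξ => ?_)
  have hLj : L ξ (Pi.single j 1) = ξ j := by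
    rw [hLapp]; simp [Pi.single_apply]
  simp only [F', _root_.smul_apply, hLj, smul_eq_mul]
  rw [mul_comm, ← Complex.re_ofReal_mul]
  congr 1
  ring

theorem coord_mul (hg : HasMoment μ (N + 1) g) (j : Fin d) :
    HasMoment μ N (fun ξ => Complex.I * (ξ j : ℂ) * g ξ) := by
  refine hg.mul_of_norm_le (p := fun ξ => Complex.I * (ξ j : ℂ)) (by fun_prop) fun ξ => ?_
  have := norm_le_pi_norm ξ j
  rw [norm_mul, Complex.norm_I, one_mul, Complex.norm_real, pow_one]
  linarith

theorem pder_iterate_reFourier (j : Fin d) (m : ℕ) :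
    ∀ {g : (Fin d → ℝ) → ℂ}, HasMoment μ (N + m) g →
    (pder d j)^[m] (reFourier μ g) =
        reFourier μ (fun ξ => (Complex.I * (ξ j : ℂ)) ^ m * g ξ) ∧
      HasMoment μ N (fun ξ => (Complex.I * (ξ j : ℂ)) ^ m * g ξ) := by
  induction m with
  | zero => intro g hg; simpa using hg
  | succ m ih =>
    intro g hg
    rw [← add_assoc] at hg
    have := ih (hg.coord_mul j)
    rw [Function.iterate_succ_apply, hg.pder_reFourier j]
    simpa only [pow_succ, mul_assoc] using this

theorem foldr_pder_reFourier (k : Fin d → ℕ) (l : List (Fin d)) :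
    ∀ {N : ℕ}, HasMoment μ (N + (l.map k).sum) g →
    l.foldr (fun j f => (pder d j)^[k j] f) (reFourier μ g) =
        reFourier μ (fun ξ => (l.map fun j => (Complex.I * (ξ j : ℂ)) ^ k j).prod * g ξ) ∧
      HasMoment μ N (fun ξ => (l.map fun j => (Complex.I * (ξ j : ℂ)) ^ k j).prod * g ξ) := by
  induction l with
  | nil => intro N hg; simpa using hg
  | cons j l ih =>
    intro N hg
    rw [List.map_cons, List.sum_cons, ← add_assoc] at hg
    obtain ⟨h1, h2⟩ := ih hg
    have := pder_iterate_reFourier j (k j) h2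
    rw [List.foldr_cons, h1]
    simpa only [List.map_cons, List.prod_cons, mul_assoc] using this

theorem mder_reFourier {k : Fin d → ℕ} (hg : HasMoment μ (∑ j, k j) g) :
    mder d k (reFourier μ g) = reFourier μ (fun ξ => symbol k ξ * g ξ) := by
  have h := (foldr_pder_reFourier (N := 0) k (List.finRange d) (μ := μ) (g := g)
    (by rwa [← Fin.sum_univ_def, zero_add])).1
  simp only [← Fin.prod_univ_def] at h
  exact h

end HasMoment

theorem hasMoment_of_norm_le {d : ℕ} {μ : Measure (Fin d → ℝ)} {N M : ℕ}
    {g : (Fin d → ℝ) → ℂ} (hμ : Integrable (fun ξ => (1 + ‖ξ‖) ^ (N + M)) μ)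
    (hg : Continuous g) (hle : ∀ ξ, ‖g ξ‖ ≤ (1 + ‖ξ‖) ^ M) : HasMoment μ N g := by
  have h1 : HasMoment μ (N + M) (fun _ => 1) := ⟨continuous_const, by simpa using hμ⟩
  simpa using h1.mul_of_norm_le hg hle

theorem hasMoment_conj_phase {d : ℕ} {μ : Measure (Fin d → ℝ)} {N : ℕ}
    (hμ : Integrable (fun ξ => (1 + ‖ξ‖) ^ N) μ) (w : Fin d → ℝ) :
    HasMoment μ N (fun ξ => (starRingEnd ℂ) (phase w ξ)) := by
  refine hasMoment_of_norm_le (M := 0) hμ ?_ fun ξ => ?_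
  · exact Complex.continuous_conj.comp (continuous_phase w)
  · simp [norm_phase]

theorem norm_symbol_le_one_add {d : ℕ} (k : Fin d → ℕ) (ξ : Fin d → ℝ) :
    ‖symbol k ξ‖ ≤ (1 + ‖ξ‖) ^ (∑ j, k j) :=
  (norm_symbol_le k ξ).trans (pow_le_pow_left₀ (norm_nonneg _) (by linarith) _)

theorem matern_sub_eq_reFourier {α : ℝ} {d : ℕ} {μ : Measure (Fin d → ℝ)}
    (hK : ∀ x, matern α d x = ∫ ξ, (phase x ξ).re ∂μ) (y x : Fin d → ℝ) :
    matern α d (y - x) = reFourier μ (fun ξ => (starRingEnd ℂ) (phase y ξ)) x := by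
  rw [hK]
  refine integral_congr_ae (Filter.Eventually.of_forall fun ξ => ?_)
  simp only
  rw [phase_sub, ← Complex.conj_re, map_mul, Complex.conj_conj]

theorem mder2_condK {α : ℝ} {d n : ℕ} {μ : Measure (Fin d → ℝ)}
    (hK : ∀ x, matern α d x = ∫ ξ, (phase x ξ).re ∂μ) (w : Fin n → Fin d → ℝ) (k : Fin d → ℕ)
    (hμ : Integrable (fun ξ => (1 + ‖ξ‖) ^ (∑ j, k j + ∑ j, k j)) μ) (x y : Fin d → ℝ) :
    mder2 d k k (condK α d w) x y =
      (∫ ξ, ((symbol k ξ * phase x ξ) * (starRingEnd ℂ) (symbol k ξ * phase y ξ)).re ∂μ) -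
      (fun i => ∫ ξ, ((symbol k ξ * phase x ξ) * (starRingEnd ℂ) (phase (w i) ξ)).re ∂μ) ⬝ᵥ
        ((maternMat α d w)⁻¹ *ᵥ
          fun i => ∫ ξ, ((symbol k ξ * phase y ξ) * (starRingEnd ℂ) (phase (w i) ξ)).re ∂μ) := by
  set ℓ := ∑ j, k j
  have hμ0 : HasMoment μ (ℓ + ℓ) (fun _ => 1) := ⟨continuous_const, by simpa using hμ⟩
  have hμ1 : Integrable (fun ξ => (1 + ‖ξ‖) ^ ℓ) μ := by
    simpa using (hμ0.mono (Nat.le_add_left ℓ ℓ)).2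
  have hph : ∀ z, HasMoment μ ℓ (fun ξ => (starRingEnd ℂ) (phase z ξ)) :=
    hasMoment_conj_phase hμ1
  have hsph : ∀ z, HasMoment μ 0 (fun ξ => symbol k ξ * (starRingEnd ℂ) (phase z ξ)) := fun z =>
    HasMoment.mul_of_norm_le (M := ℓ) (by simpa using hph z) (continuous_symbol k)
      (norm_symbol_le_one_add k)
  have hE : ∀ z, HasMoment μ ℓ (fun ξ => (starRingEnd ℂ) (symbol k ξ * phase z ξ)) := fun z =>
    hasMoment_of_norm_le (M := ℓ) hμ
      (Complex.continuous_conj.comp ((continuous_symbol k).mul (continuous_phase z))) fun ξ => by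
        rw [RCLike.norm_conj, norm_mul, norm_phase, mul_one]
        exact norm_symbol_le_one_add k ξ
  have hsE : HasMoment μ 0
      (fun ξ => symbol k ξ * (starRingEnd ℂ) (symbol k ξ * phase y ξ)) :=
    HasMoment.mul_of_norm_le (M := ℓ) (by simpa using hE y) (continuous_symbol k)
      (norm_symbol_le_one_add k)
  have hV : ∀ z i, reFourier μ (fun ξ => symbol k ξ * (starRingEnd ℂ) (phase (w i) ξ)) z =
      ∫ ξ, ((symbol k ξ * phase z ξ) * (starRingEnd ℂ) (phase (w i) ξ)).re ∂μ := fun z i => by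
    refine integral_congr_ae (Filter.Eventually.of_forall fun ξ => ?_)
    simp only
    congr 1
    ring
  set V : (Fin d → ℝ) → Fin n → ℝ := fun z i =>
    ∫ ξ, ((symbol k ξ * phase z ξ) * (starRingEnd ℂ) (phase (w i) ξ)).re ∂μ
  set M := (maternMat α d w)⁻¹
  have hvec : ∀ z, maternVec α d w z =
      fun i => reFourier μ (fun ξ => (starRingEnd ℂ) (phase (w i) ξ)) z := fun z =>
    funext fun i => matern_sub_eq_reFourier hK (w i) z
  have hfirst : ∀ z, condK α d w z = reFourier μ (fun ξ => (starRingEnd ℂ) (phase z ξ) -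
      ∑ i, ((maternVec α d w z ᵥ* M) i : ℂ) * (starRingEnd ℂ) (phase (w i) ξ)) := fun z => by
    funext t
    rw [(hph z).reFourier_sub_sum fun i => hph (w i), condK, matern_sub_eq_reFourier hK,
      dotProduct_mulVec, hvec t]
    rfl
  have hinner : (fun z => mder d k (condK α d w z) y) = reFourier μ
      (fun ξ => (starRingEnd ℂ) (symbol k ξ * phase y ξ) -
        ∑ i, ((M *ᵥ V y) i : ℂ) * (starRingEnd ℂ) (phase (w i) ξ)) := by
    funext z
    rw [hfirst, ((hph z).sub_sum (fun i => hph (w i)) _).mder_reFourier,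
      (hE y).reFourier_sub_sum fun i => hph (w i)]
    have : (fun ξ => symbol k ξ * ((starRingEnd ℂ) (phase z ξ) -
        ∑ i, ((maternVec α d w z ᵥ* M) i : ℂ) * (starRingEnd ℂ) (phase (w i) ξ))) =
        fun ξ => symbol k ξ * (starRingEnd ℂ) (phase z ξ) -
        ∑ i, ((maternVec α d w z ᵥ* M) i : ℂ) *
          (symbol k ξ * (starRingEnd ℂ) (phase (w i) ξ)) := by
      funext ξ
      rw [mul_sub, Finset.mul_sum]
      congr 1
      exact Finset.sum_congr rfl fun i _ => by ring
    rw [this, (hsph z).reFourier_sub_sum fun i => hsph (w i)]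
    congr 1
    · refine integral_congr_ae (Filter.Eventually.of_forall fun ξ => ?_)
      simp only
      rw [← Complex.conj_re]
      simp only [map_mul, Complex.conj_conj]
      congr 1
      ring
    · have h1 := dotProduct_mulVec (maternVec α d w z) M (V y)
      simp only [hV]
      calc _ = (maternVec α d w z ᵥ* M) ⬝ᵥ V y := rfl
        _ = (M *ᵥ V y) ⬝ᵥ maternVec α d w z := by rw [← h1, dotProduct_comm]
        _ = _ := by rw [hvec z]; rfl
  rw [mder2, hinner, ((hE y).sub_sum (fun i => hph (w i)) _).mder_reFourier]
  have : (fun ξ => symbol k ξ * ((starRingEnd ℂ) (symbol k ξ * phase y ξ) -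
      ∑ i, ((M *ᵥ V y) i : ℂ) * (starRingEnd ℂ) (phase (w i) ξ))) =
      fun ξ => symbol k ξ * (starRingEnd ℂ) (symbol k ξ * phase y ξ) -
      ∑ i, ((M *ᵥ V y) i : ℂ) * (symbol k ξ * (starRingEnd ℂ) (phase (w i) ξ)) := by
    funext ξ
    rw [mul_sub, Finset.mul_sum]
    congr 1
    exact Finset.sum_congr rfl fun i _ => by ring
  rw [this, hsE.reFourier_sub_sum fun i => hsph (w i)]
  congr 1
  · refine integral_congr_ae (Filter.Eventually.of_forall fun ξ => ?_)
    simp only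
    congr 1
    ring
  · simp only [hV]
    exact dotProduct_comm (M *ᵥ V y) (V x)

theorem abs_norm_sq_sub_gram_inv_le {E : Type*} [NormedAddCommGroup E] [InnerProductSpace ℝ E]
    {n : ℕ} (e : Fin n → E) (G : E) {M : Matrix (Fin n) (Fin n) ℝ} {v : Fin n → ℝ}
    (hM : ∀ i j, M i j = inner ℝ (e i) (e j)) (hdet : IsUnit M.det)
    (hv : ∀ i, v i = inner ℝ (e i) G) :
    |‖G‖ ^ 2 - v ⬝ᵥ (M⁻¹ *ᵥ v)| ≤ ‖G‖ ^ 2 := by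
  set u := M⁻¹ *ᵥ v with hu
  have hMu : M *ᵥ u = v := by
    rw [hu, mulVec_mulVec, mul_nonsing_inv _ hdet, one_mulVec]
  set P := ∑ i, u i • e i with hP
  have hGP : inner ℝ P G = v ⬝ᵥ u := by
    rw [hP, sum_inner]
    refine Finset.sum_congr rfl fun i _ => ?_
    rw [real_inner_smul_left, hv, mul_comm]
  have hPP : ‖P‖ ^ 2 = v ⬝ᵥ u := by
    rw [← real_inner_self_eq_norm_sq, dotProduct_comm, ← hMu]
    nth_rw 1 [hP]
    rw [sum_inner]
    refine Finset.sum_congr rfl fun i _ => ?_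
    rw [real_inner_smul_left, hP, inner_sum]
    simp only [real_inner_smul_right, mulVec, dotProduct, hM]
    congr 1
    exact Finset.sum_congr rfl fun j _ => mul_comm _ _
  have h1 : ‖P - G‖ ^ 2 = ‖P‖ ^ 2 - 2 * inner ℝ P G + ‖G‖ ^ 2 := norm_sub_sq_real P G
  rw [abs_le]
  constructor <;> nlinarith [sq_nonneg ‖P‖, sq_nonneg ‖P - G‖, sq_nonneg ‖G‖]

theorem inner_toLp {X : Type*} [MeasurableSpace X] {μ : Measure X} {f g : X → ℂ}
    (hf : MemLp f 2 μ) (hg : MemLp g 2 μ) :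
    inner ℝ (hf.toLp f) (hg.toLp g) = ∫ a, (g a * (starRingEnd ℂ) (f a)).re ∂μ := by
  rw [L2.inner_def]
  refine integral_congr_ae ?_
  filter_upwards [hf.coeFn_toLp, hg.coeFn_toLp] with a h1 h2
  rw [h1, h2, Complex.inner]

theorem abs_second_difference_condK_le {α : ℝ} {d n : ℕ} {μ : Measure (Fin d → ℝ)}
    (hK : ∀ x, matern α d x = ∫ ξ, (phase x ξ).re ∂μ) (w : Fin n → Fin d → ℝ)
    (hdet : IsUnit (maternMat α d w).det) (k : Fin d → ℕ)
    (hμ : Integrable (fun ξ => (1 + ‖ξ‖) ^ (∑ j, k j + ∑ j, k j)) μ) (x y : Fin d → ℝ) :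
    |mder2 d k k (condK α d w) x x - mder2 d k k (condK α d w) x y -
        mder2 d k k (condK α d w) y x + mder2 d k k (condK α d w) y y| ≤
      ∫ ξ, (‖symbol k ξ‖ * ‖phase x ξ - phase y ξ‖) ^ 2 ∂μ := by
  have hE : ∀ z, MemLp (fun ξ => symbol k ξ * phase z ξ) 2 μ := fun z => by
    have hc : Continuous fun ξ => symbol k ξ * phase z ξ :=
      (continuous_symbol k).mul (continuous_phase z)
    rw [memLp_two_iff_integrable_sq_norm hc.aestronglyMeasurable]
    refine hμ.mono' (Continuous.aestronglyMeasurable (by fun_prop))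
      (Filter.Eventually.of_forall fun ξ => ?_)
    rw [Real.norm_of_nonneg (by positivity), norm_mul, norm_phase, mul_one, pow_add, ← sq]
    exact pow_le_pow_left₀ (norm_nonneg _) (norm_symbol_le_one_add k ξ) 2
  have hp : ∀ z, MemLp (fun ξ => phase z ξ) 2 μ := fun z => by
    rw [memLp_two_iff_integrable_sq_norm (continuous_phase z).aestronglyMeasurable]
    simpa [norm_phase] using
      (HasMoment.mono (μ := μ) (g := fun _ => 1) ⟨continuous_const, by simpa using hμ⟩
        (Nat.zero_le _)).2
  have hV : ∀ z, (fun i => ∫ ξ, ((symbol k ξ * phase z ξ) *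
      (starRingEnd ℂ) (phase (w i) ξ)).re ∂μ) =
      fun i => inner ℝ ((hp (w i)).toLp _) ((hE z).toLp _) := fun z =>
    funext fun i => (inner_toLp _ _).symm
  simp only [mder2_condK hK w k hμ, hV, ← inner_toLp (hE _) (hE _)]
  set G := (hE x).toLp - (hE y).toLp with hG
  have hGn : ‖G‖ ^ 2 = ∫ ξ, (‖symbol k ξ‖ * ‖phase x ξ - phase y ξ‖) ^ 2 ∂μ := by
    rw [hG, ← MemLp.toLp_sub, ← real_inner_self_eq_norm_sq, inner_toLp]
    refine integral_congr_ae (Filter.Eventually.of_forall fun ξ => ?_)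
    simp only [Pi.sub_apply]
    rw [← mul_sub, ← norm_mul, Complex.mul_conj, Complex.ofReal_re, Complex.normSq_eq_norm_sq]
  have key := abs_norm_sq_sub_gram_inv_le (fun i => (hp (w i)).toLp _) G
    (M := maternMat α d w) (v := fun i => inner ℝ ((hp (w i)).toLp _) G) (fun i j => by
      rw [real_inner_comm, inner_toLp]
      simp only [maternMat, of_apply, hK, phase_sub]) hdet fun i => rfl
  rw [← hGn]
  refine le_trans (le_of_eq ?_) key
  congr 1
  rw [← real_inner_self_eq_norm_sq]
  have hv : (fun i => inner ℝ ((hp (w i)).toLp _) G) =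
      (fun i => inner ℝ ((hp (w i)).toLp _) ((hE x).toLp _)) -
        fun i => inner ℝ ((hp (w i)).toLp _) ((hE y).toLp _) := by
    funext i; simp only [hG, inner_sub_right, Pi.sub_apply]
  rw [hv, hG]
  simp only [mulVec_sub, dotProduct_sub, sub_dotProduct, inner_sub_left, inner_sub_right]
  ring

/-- The spectral density of the Matérn kernel. -/
def maternDensity (α : ℝ) (d : ℕ) (ξ : Fin d → ℝ) : ℝ :=
  (1 + ∑ j, ξ j ^ 2) ^ (-(α + (d : ℝ) / 2))

/-- The spectral measure of the Matérn kernel. -/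
def maternMeasure (α : ℝ) (d : ℕ) : Measure (Fin d → ℝ) :=
  volume.withDensity fun ξ => ((maternDensity α d ξ).toNNReal : ENNReal)

theorem maternDensity_nonneg (α : ℝ) (d : ℕ) (ξ : Fin d → ℝ) : 0 ≤ maternDensity α d ξ :=
  Real.rpow_nonneg (by positivity) _

theorem continuous_maternDensity (α : ℝ) (d : ℕ) : Continuous (maternDensity α d) := by
  unfold maternDensity
  refine Continuous.rpow_const (by fun_prop) fun ξ => Or.inl ?_
  have : 0 ≤ ∑ j, ξ j ^ 2 := Finset.sum_nonneg fun j _ => sq_nonneg _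
  positivity

theorem integral_maternMeasure (α : ℝ) (d : ℕ) (f : (Fin d → ℝ) → ℝ) :
    ∫ ξ, f ξ ∂maternMeasure α d = ∫ ξ, maternDensity α d ξ * f ξ := by
  unfold maternMeasure
  rw [integral_withDensity_eq_integral_smul
    (continuous_maternDensity α d).measurable.real_toNNReal]
  simp only [NNReal.smul_def, Real.coe_toNNReal _ (maternDensity_nonneg α d _), smul_eq_mul]

theorem integrable_maternMeasure_iff (α : ℝ) (d : ℕ) (f : (Fin d → ℝ) → ℝ) :
    Integrable f (maternMeasure α d) ↔ Integrable fun ξ => maternDensity α d ξ * f ξ := by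
  unfold maternMeasure
  rw [integrable_withDensity_iff_integrable_smul
    (continuous_maternDensity α d).measurable.real_toNNReal]
  simp only [NNReal.smul_def, Real.coe_toNNReal _ (maternDensity_nonneg α d _), smul_eq_mul]

theorem matern_eq_integral_phase (α : ℝ) (d : ℕ) (x : Fin d → ℝ) :
    matern α d x = ∫ ξ, (phase x ξ).re ∂maternMeasure α d := by
  rw [integral_maternMeasure]
  simp only [phase_re, matern, maternDensity, mul_comm]

theorem norm_sq_le_sum_sq {d : ℕ} (ξ : Fin d → ℝ) : ‖ξ‖ ^ 2 ≤ ∑ j, ξ j ^ 2 := by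
  have h : ‖ξ‖ ≤ Real.sqrt (∑ j, ξ j ^ 2) := by
    refine (pi_norm_le_iff_of_nonneg (Real.sqrt_nonneg _)).2 fun j => ?_
    exact Real.abs_le_sqrt
      (Finset.single_le_sum (f := fun j => ξ j ^ 2) (fun i _ => sq_nonneg _) (Finset.mem_univ j))
  calc ‖ξ‖ ^ 2 ≤ Real.sqrt (∑ j, ξ j ^ 2) ^ 2 := by gcongr
    _ = _ := Real.sq_sqrt (Finset.sum_nonneg fun j _ => sq_nonneg _)

theorem maternDensity_le {α : ℝ} (hα : 0 < α) {d : ℕ} (ξ : Fin d → ℝ) :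
    maternDensity α d ξ ≤ (1 + ‖ξ‖ ^ 2) ^ (-(α + (d : ℝ) / 2)) := by
  refine Real.rpow_le_rpow_of_nonpos (by positivity) (by linarith [norm_sq_le_sum_sq ξ]) ?_
  have : (0 : ℝ) ≤ d := Nat.cast_nonneg d
  linarith

theorem integrable_moment_maternMeasure {α : ℝ} (hα : 0 < α) {d ℓ : ℕ} (hℓ : (ℓ : ℝ) < α) :
    Integrable (fun ξ : Fin d → ℝ => (1 + ‖ξ‖) ^ (ℓ + ℓ)) (maternMeasure α d) := by
  rw [integrable_maternMeasure_iff]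
  have hd0 : (0 : ℝ) ≤ d := Nat.cast_nonneg d
  have h1 : Integrable (fun ξ : Fin d → ℝ => (1 + ‖ξ‖) ^ (-(2 * α + d - 2 * ℓ))) :=
    integrable_one_add_norm (by simp only [Module.finrank_fin_fun]; linarith)
  have hc := continuous_maternDensity α d
  refine (h1.const_mul (2 ^ (α + (d : ℝ) / 2))).mono'
    (Continuous.aestronglyMeasurable (by fun_prop)) (Filter.Eventually.of_forall fun ξ => ?_)
  have hn := norm_nonneg ξ
  have hpos : 0 < 1 + ‖ξ‖ := by linarith
  rw [Real.norm_of_nonneg (mul_nonneg (maternDensity_nonneg α d ξ) (by positivity))]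
  have h2 : (1 + ‖ξ‖ ^ 2) ^ (-(α + (d : ℝ) / 2)) ≤
      2 ^ (α + (d : ℝ) / 2) * (1 + ‖ξ‖) ^ (-(2 * α + d)) := by
    calc _ ≤ ((1 + ‖ξ‖) ^ (2 : ℝ) / 2) ^ (-(α + (d : ℝ) / 2)) := by
          refine Real.rpow_le_rpow_of_nonpos (by positivity) ?_ (by linarith)
          rw [Real.rpow_two]
          nlinarith [sq_nonneg (1 - ‖ξ‖)]
      _ = _ := by
          rw [Real.div_rpow (by positivity) (by norm_num), ← Real.rpow_mul hpos.le,
            Real.rpow_neg (by norm_num : (0 : ℝ) ≤ 2), div_inv_eq_mul, mul_comm]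
          congr 2
          ring
  calc maternDensity α d ξ * (1 + ‖ξ‖) ^ (ℓ + ℓ)
      ≤ 2 ^ (α + (d : ℝ) / 2) * (1 + ‖ξ‖) ^ (-(2 * α + d)) * (1 + ‖ξ‖) ^ (ℓ + ℓ) := by
        gcongr
        exact (maternDensity_le hα ξ).trans h2
    _ = _ := by
        rw [mul_assoc, ← Real.rpow_natCast, ← Real.rpow_add hpos]
        congr 2
        push_cast
        ring

/-- The radial integrand that controls the second difference at distance `t`. -/
def radialBound (β c t y : ℝ) : ℝ :=
  min 4 (c * (t * y) ^ 2) * (1 + y ^ 2) ^ (-(β + 1 / 2))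

theorem continuous_radialBound (β c t : ℝ) : Continuous (radialBound β c t) := by
  unfold radialBound
  refine Continuous.mul (by fun_prop) (Continuous.rpow_const (by fun_prop) fun y => Or.inl ?_)
  positivity

theorem radialBound_nonneg {c : ℝ} (hc : 0 ≤ c) (β t y : ℝ) : 0 ≤ radialBound β c t y :=
  mul_nonneg (le_min (by norm_num) (by positivity)) (Real.rpow_nonneg (by positivity) _)

theorem one_add_sq_rpow_le {β y : ℝ} (hβ : 0 < β) (hy : 0 < y) :
    (1 + y ^ 2) ^ (-(β + 1 / 2)) ≤ y ^ (-(2 * β + 1)) := by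
  calc (1 + y ^ 2) ^ (-(β + 1 / 2)) ≤ (y ^ (2 : ℝ)) ^ (-(β + 1 / 2)) := by
        refine Real.rpow_le_rpow_of_nonpos (by positivity) ?_ (by linarith)
        rw [Real.rpow_two]; linarith
    _ = _ := by
        rw [← Real.rpow_mul hy.le]; congr 1; ring

theorem radialBound_le_of_pos {β c t y : ℝ} (hβ : 0 < β) (hy : 0 < y) :
    radialBound β c t y ≤ 4 * y ^ (-(2 * β + 1)) :=
  mul_le_mul (min_le_left _ _) (one_add_sq_rpow_le hβ hy) (by positivity) (by norm_num)

theorem radialBound_le_const {β c t y : ℝ} (hβ : 0 < β) (hc : 0 ≤ c) (hy : 0 ≤ y) (hy1 : y ≤ 1) :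
    radialBound β c t y ≤ c * t ^ 2 := by
  have h1 : (1 + y ^ 2) ^ (-(β + 1 / 2)) ≤ 1 :=
    Real.rpow_le_one_of_one_le_of_nonpos (by nlinarith) (by linarith)
  calc radialBound β c t y ≤ c * (t * y) ^ 2 * 1 :=
        mul_le_mul (min_le_right _ _) h1 (by positivity) (by positivity)
    _ = c * t ^ 2 * y ^ 2 := by ring
    _ ≤ c * t ^ 2 * 1 := by gcongr; nlinarith
    _ = _ := mul_one _

theorem radialBound_le_rpow {β c t y : ℝ} (hβ : 0 < β) (hc : 0 ≤ c) (hy : 0 < y) :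
    radialBound β c t y ≤ c * t ^ 2 * y ^ (1 - 2 * β) := by
  calc radialBound β c t y ≤ c * (t * y) ^ 2 * y ^ (-(2 * β + 1)) :=
        mul_le_mul (min_le_right _ _) (one_add_sq_rpow_le hβ hy) (by positivity) (by positivity)
    _ = c * t ^ 2 * (y ^ (2 : ℝ) * y ^ (-(2 * β + 1))) := by rw [Real.rpow_two]; ring
    _ = _ := by rw [← Real.rpow_add hy]; congr 2; ring

theorem integrableOn_radialBound {β c : ℝ} (hβ : 0 < β) (hc : 0 ≤ c) (t : ℝ) :
    IntegrableOn (radialBound β c t) (Set.Ioi 0) := by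
  have hcont := continuous_radialBound β c t
  rw [← Set.Ioc_union_Ioi_eq_Ioi zero_le_one]
  refine IntegrableOn.union (hcont.integrableOn_Ioc) ?_
  refine Integrable.mono' ((integrableOn_Ioi_rpow_of_lt (a := -(2 * β + 1)) (by linarith)
    zero_lt_one).const_mul 4) hcont.aestronglyMeasurable ?_
  refine ae_restrict_of_forall_mem measurableSet_Ioi fun y (hy : 1 < y) => ?_
  rw [Real.norm_of_nonneg (radialBound_nonneg hc _ _ _)]
  exact radialBound_le_of_pos hβ (by linarith)

theorem integral_radialBound_le {β c t : ℝ} (hβ : 0 < β) (hc : 0 ≤ c) (ht : 0 < t) (ht1 : t ≤ 1) :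
    ∫ y in Set.Ioi 0, radialBound β c t y ≤
      c * t ^ 2 * (1 + ∫ y in (1 : ℝ)..t⁻¹, y ^ (1 - 2 * β)) + 2 / β * t ^ (2 * β) := by
  have hint := integrableOn_radialBound hβ hc t
  have htinv : 1 ≤ t⁻¹ := (one_le_inv₀ ht).2 ht1
  have hI1 : IntegrableOn (radialBound β c t) (Set.Ioi 1) :=
    hint.mono_set (Set.Ioi_subset_Ioi zero_le_one)
  rw [← Set.Ioc_union_Ioi_eq_Ioi (zero_le_one (α := ℝ)),
    setIntegral_union (Set.Ioc_disjoint_Ioi le_rfl) measurableSet_Ioi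
      (hint.mono_set Set.Ioc_subset_Ioi_self) hI1,
    ← Set.Ioc_union_Ioi_eq_Ioi htinv,
    setIntegral_union (Set.Ioc_disjoint_Ioi le_rfl) measurableSet_Ioi
      (hI1.mono_set Set.Ioc_subset_Ioi_self) (hI1.mono_set (Set.Ioi_subset_Ioi htinv))]
  have h1 : ∫ y in Set.Ioc 0 1, radialBound β c t y ≤ c * t ^ 2 := by
    have := setIntegral_mono_on (hint.mono_set Set.Ioc_subset_Ioi_self)
      (integrableOn_const (C := c * t ^ 2) (by simp)) (measurableSet_Ioc (a := (0 : ℝ)) (b := 1))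
      fun y hy => radialBound_le_const (t := t) hβ hc hy.1.le hy.2
    simpa using this
  have h2 : ∫ y in Set.Ioc 1 t⁻¹, radialBound β c t y ≤
      c * t ^ 2 * ∫ y in (1 : ℝ)..t⁻¹, y ^ (1 - 2 * β) := by
    rw [intervalIntegral.integral_of_le htinv, ← integral_const_mul]
    refine setIntegral_mono_on (hI1.mono_set Set.Ioc_subset_Ioi_self) ?_ measurableSet_Ioc
      fun y hy => radialBound_le_rpow hβ hc (by linarith [hy.1])
    refine Integrable.const_mul ?_ _
    refine ((intervalIntegrable_iff_integrableOn_Ioc_of_le htinv).1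
      (intervalIntegral.intervalIntegrable_rpow (Or.inr ?_)))
    rw [Set.uIcc_of_le htinv]
    exact fun h => by linarith [h.1]
  have h3 : ∫ y in Set.Ioi t⁻¹, radialBound β c t y ≤ 2 / β * t ^ (2 * β) := by
    have hpos : 0 < t⁻¹ := by positivity
    calc _ ≤ ∫ y in Set.Ioi t⁻¹, 4 * y ^ (-(2 * β + 1)) := by
          refine setIntegral_mono_on (hI1.mono_set (Set.Ioi_subset_Ioi htinv))
            ((integrableOn_Ioi_rpow_of_lt (by linarith) hpos).const_mul 4) measurableSet_Ioi
            fun y hy => radialBound_le_of_pos hβ (hpos.trans hy)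
      _ = _ := by
          rw [integral_const_mul, integral_Ioi_rpow_of_lt (by linarith) hpos,
            show -(2 * β + 1) + 1 = -(2 * β) by ring, Real.inv_rpow ht.le, Real.rpow_neg ht.le,
            inv_inv]
          field_simp
          norm_num
  linarith

theorem abs_inner_le {d : ℕ} (h ξ : Fin d → ℝ) : |∑ j, h j * ξ j| ≤ d * (nrm h * ‖ξ‖) := by
  refine (Finset.abs_sum_le_sum_abs _ _).trans ?_
  calc ∑ j, |h j * ξ j| ≤ ∑ _j : Fin d, nrm h * ‖ξ‖ := by
        refine Finset.sum_le_sum fun j _ => ?_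
        rw [abs_mul]
        refine mul_le_mul ?_ (norm_le_pi_norm ξ j) (abs_nonneg _) (Real.sqrt_nonneg _)
        exact Real.abs_le_sqrt (Finset.single_le_sum (f := fun j => h j ^ 2)
          (fun i _ => sq_nonneg _) (Finset.mem_univ j))
    _ = _ := by simp

theorem norm_phase_sub_sq_le {d : ℕ} (x h ξ : Fin d → ℝ) :
    ‖phase x ξ - phase (x + h) ξ‖ ^ 2 ≤ min 4 ((d : ℝ) ^ 2 * (nrm h * ‖ξ‖) ^ 2) := by
  have hadd : phase (x + h) ξ = phase x ξ * phase h ξ := by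
    unfold phase
    rw [← Complex.exp_add]
    congr 1
    simp [add_mul, Finset.sum_add_distrib]
    ring
  refine le_min ?_ ?_
  · have : ‖phase x ξ - phase (x + h) ξ‖ ≤ 2 :=
      (norm_sub_le _ _).trans (by rw [norm_phase, norm_phase]; norm_num)
    nlinarith [norm_nonneg (phase x ξ - phase (x + h) ξ)]
  · rw [← mul_pow]
    refine pow_le_pow_left₀ (norm_nonneg _) ?_ 2
    rw [hadd, ← mul_one_sub, norm_mul, norm_phase, one_mul, norm_sub_rev]
    exact Real.norm_exp_I_mul_ofReal_sub_one_le.trans (abs_inner_le h ξ)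

theorem pow_mul_one_add_sq_rpow_le {y : ℝ} (hy : 0 < y) (m : ℕ) (s : ℝ) :
    y ^ m * (1 + y ^ 2) ^ s ≤ (1 + y ^ 2) ^ ((m : ℝ) / 2 + s) := by
  have h1 : y ^ m ≤ (1 + y ^ 2) ^ ((m : ℝ) / 2) := by
    calc y ^ m = (y ^ (2 : ℝ)) ^ ((m : ℝ) / 2) := by
          rw [← Real.rpow_mul hy.le, ← Real.rpow_natCast]; congr 1; ring
      _ ≤ _ := by
          refine Real.rpow_le_rpow (by positivity) ?_ (by positivity)
          rw [Real.rpow_two]; linarith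
  rw [Real.rpow_add (by positivity)]
  gcongr

theorem integral_symbol_phase_sub_le {α : ℝ} (hα : 0 < α) {d : ℕ} (hd : 1 ≤ d) (k : Fin d → ℕ)
    (hk : ((∑ j, k j : ℕ) : ℝ) < α) (x h : Fin d → ℝ) :
    ∫ ξ, (‖symbol k ξ‖ * ‖phase x ξ - phase (x + h) ξ‖) ^ 2 ∂maternMeasure α d ≤
      d * volume.real (Metric.ball (0 : Fin d → ℝ) 1) *
        ∫ y in Set.Ioi 0, radialBound (α - (∑ j, k j : ℕ)) ((d : ℝ) ^ 2) (nrm h) y := by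
  set ℓ := ∑ j, k j
  let f : ℝ → ℝ := fun y => (1 + y ^ 2) ^ (-(α + (d : ℝ) / 2)) *
    (y ^ (ℓ + ℓ) * min 4 ((d : ℝ) ^ 2 * (nrm h * y) ^ 2))
  have hf0 : ∀ y, 0 ≤ y → 0 ≤ f y := fun y hy =>
    mul_nonneg (Real.rpow_nonneg (by positivity) _)
      (mul_nonneg (by positivity) (le_min (by norm_num) (by positivity)))
  have hfc : Continuous f := by
    refine Continuous.mul (Continuous.rpow_const (by fun_prop) fun y => Or.inl ?_) (by fun_prop)
    positivity
  have hle : ∀ y ∈ Set.Ioi (0 : ℝ),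
      y ^ (d - 1) • f y ≤ radialBound (α - ℓ) ((d : ℝ) ^ 2) (nrm h) y := fun y hy => by
    have hm : 0 ≤ min 4 ((d : ℝ) ^ 2 * (nrm h * y) ^ 2) := le_min (by norm_num) (by positivity)
    have hp := pow_mul_one_add_sq_rpow_le hy (d - 1 + (ℓ + ℓ)) (-(α + (d : ℝ) / 2))
    calc y ^ (d - 1) • f y = min 4 ((d : ℝ) ^ 2 * (nrm h * y) ^ 2) *
          (y ^ (d - 1 + (ℓ + ℓ)) * (1 + y ^ 2) ^ (-(α + (d : ℝ) / 2))) := by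
          simp only [f, smul_eq_mul, pow_add]; ring
      _ ≤ _ := mul_le_mul_of_nonneg_left hp hm
      _ = _ := by
          unfold radialBound
          congr 2
          push_cast [Nat.cast_sub hd]
          ring
  have hnonneg : ∀ y ∈ Set.Ioi (0 : ℝ), 0 ≤ y ^ (d - 1) • f y := fun y hy =>
    mul_nonneg (pow_nonneg (le_of_lt hy) _) (hf0 y (le_of_lt hy))
  have hq := integrableOn_radialBound (sub_pos.2 hk) (sq_nonneg (d : ℝ)) (nrm h)
  have hi : IntegrableOn (fun y : ℝ => y ^ (d - 1) • f y) (Set.Ioi 0) := by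
    refine Integrable.mono' hq (Continuous.aestronglyMeasurable (by fun_prop))
      (ae_restrict_of_forall_mem measurableSet_Ioi fun y hy => ?_)
    rw [Real.norm_of_nonneg (hnonneg y hy)]
    exact hle y hy
  have : Nonempty (Fin d) := ⟨⟨0, hd⟩⟩
  have hfi : Integrable fun ξ : Fin d → ℝ => f ‖ξ‖ := by
    rw [integrable_fun_norm_addHaar]
    simpa only [Module.finrank_fin_fun] using hi
  rw [integral_maternMeasure]
  calc _ ≤ ∫ ξ : Fin d → ℝ, f ‖ξ‖ := by
        refine integral_mono_of_nonneg (Filter.Eventually.of_forall fun ξ =>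
          mul_nonneg (maternDensity_nonneg α d ξ) (sq_nonneg _)) hfi
          (Filter.Eventually.of_forall fun ξ => ?_)
        refine mul_le_mul (maternDensity_le hα ξ) ?_ (sq_nonneg _) (by positivity)
        rw [mul_pow, pow_add, ← sq]
        exact mul_le_mul (pow_le_pow_left₀ (norm_nonneg _) (norm_symbol_le k ξ) 2)
          (norm_phase_sub_sq_le x h ξ) (sq_nonneg _) (by positivity)
    _ = d * volume.real (Metric.ball (0 : Fin d → ℝ) 1) *
          ∫ y in Set.Ioi 0, y ^ (d - 1) • f y := by
        rw [integral_fun_norm_addHaar]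
        simp only [Module.finrank_fin_fun, nsmul_eq_mul, smul_eq_mul, mul_assoc]
    _ ≤ _ := mul_le_mul_of_nonneg_left
        (setIntegral_mono_on hi hq measurableSet_Ioi hle) (by positivity)

theorem lbelow_add_one {α : ℝ} (hα : 0 < α) : ((lbelow α : ℕ) : ℝ) + 1 = (⌈α⌉₊ : ℝ) := by
  have h : 1 ≤ ⌈α⌉₊ := Nat.one_le_ceil_iff.2 hα
  rw [lbelow, Nat.cast_sub h]; simp

theorem lbelow_lt {α : ℝ} (hα : 0 < α) : ((lbelow α : ℕ) : ℝ) < α := by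
  have := Nat.ceil_lt_add_one hα.le
  linarith [lbelow_add_one hα]

theorem sub_lbelow_lt_one {α : ℝ} (hα : 0 < α) (h : ¬ IsNatVal α) : α - (lbelow α : ℕ) < 1 := by
  have h1 := (Nat.le_ceil α).lt_of_ne fun he => h ⟨_, he⟩
  linarith [lbelow_add_one hα]

theorem sub_lbelow_eq_one {α : ℝ} (hα : 0 < α) (h : IsNatVal α) : α - (lbelow α : ℕ) = 1 := by
  obtain ⟨n, rfl⟩ := h
  have := lbelow_add_one hα
  rw [Nat.ceil_natCast] at this
  linarith

theorem radial_estimate_of_lt_one {β t : ℝ} (c : ℝ) (hc : 0 ≤ c) (hβ1 : β < 1)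
    (ht : 0 < t) (ht1 : t ≤ 1) :
    c * t ^ 2 * (1 + ∫ y in (1 : ℝ)..t⁻¹, y ^ (1 - 2 * β)) + 2 / β * t ^ (2 * β) ≤
      (c * (1 + 1 / (2 - 2 * β)) + 2 / β) * t ^ (2 * β) := by
  have hb : 0 < 2 - 2 * β := by linarith
  rw [integral_rpow (Or.inl (by linarith)), show 1 - 2 * β + 1 = 2 - 2 * β by ring,
    Real.one_rpow, Real.inv_rpow ht.le]
  have h1 : t ^ 2 = t ^ (2 * β) * t ^ (2 - 2 * β) := by
    rw [← Real.rpow_add ht, ← Real.rpow_two]; congr 1; ring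
  have h2 : t ^ (2 - 2 * β) ≤ 1 := Real.rpow_le_one ht.le ht1 hb.le
  have h3 : 0 < t ^ (2 - 2 * β) := Real.rpow_pos_of_pos ht _
  have h4 : 0 < t ^ (2 * β) := Real.rpow_pos_of_pos ht _
  have h5 : t ^ (2 - 2 * β) * (1 + ((t ^ (2 - 2 * β))⁻¹ - 1) / (2 - 2 * β)) ≤
      1 + 1 / (2 - 2 * β) := by
    have : t ^ (2 - 2 * β) * (1 + ((t ^ (2 - 2 * β))⁻¹ - 1) / (2 - 2 * β)) =
        t ^ (2 - 2 * β) + (1 - t ^ (2 - 2 * β)) / (2 - 2 * β) := by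
      field_simp
    rw [this]
    gcongr
    linarith
  rw [h1, add_mul]
  gcongr ?_ + _
  calc _ = c * t ^ (2 * β) *
        (t ^ (2 - 2 * β) * (1 + ((t ^ (2 - 2 * β))⁻¹ - 1) / (2 - 2 * β))) := by ring
    _ ≤ c * t ^ (2 * β) * (1 + 1 / (2 - 2 * β)) := by gcongr
    _ = _ := by ring

theorem radial_estimate_one {t : ℝ} (c : ℝ) (hc : 0 ≤ c) (ht : 0 < t) (ht1 : t ≤ 1 / 2) :
    c * t ^ 2 * (1 + ∫ y in (1 : ℝ)..t⁻¹, y ^ (1 - 2 * (1 : ℝ))) + 2 / 1 * t ^ (2 * (1 : ℝ)) ≤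
      (3 * c + 4) * (t ^ 2 * Real.log (1 / t)) := by
  have hI : ∫ y in (1 : ℝ)..t⁻¹, y ^ (1 - 2 * (1 : ℝ)) = Real.log (1 / t) := by
    simp only [show (1 : ℝ) - 2 * 1 = -1 by norm_num, Real.rpow_neg_one]
    rw [integral_inv_of_pos one_pos (inv_pos.2 ht), div_one, one_div]
  have hlog : 1 / 2 ≤ Real.log (1 / t) := by
    have h1 : Real.log 2 ≤ Real.log (1 / t) := by
      refine Real.log_le_log (by norm_num) ?_
      rw [le_div_iff₀ ht]; linarith
    linarith [Real.log_two_gt_d9]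
  rw [hI, mul_one, Real.rpow_two]
  nlinarith [mul_nonneg (mul_nonneg hc (sq_nonneg t)) (sub_nonneg.2 hlog),
    mul_nonneg (sq_nonneg t) (sub_nonneg.2 hlog)]

/-- Lemma `matern cond smooth`, second-difference part: with constants `C`
and `δ` depending only on `α` and `d` (independent of the conditioning set `A`), for all
multi-indices `k` with `|k| = ⌊α⌋⁻` and all small `h ≠ 0`, the second difference of
`K̃^{(k,k)}` is bounded by `C ‖h‖₂^{2(α−⌊α⌋⁻)}` if `α ∉ ℕ` and `C ‖h‖₂² ln(1/‖h‖₂)` if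
`α ∈ ℕ`. -/
theorem stmt10 (α : ℝ) (hα : 0 < α) (d : ℕ) (hd : 1 ≤ d) :
    ∃ C : ℝ, 0 < C ∧ ∃ δ : ℝ, 0 < δ ∧ δ < 1 ∧
      ∀ (n : ℕ) (w : Fin n → Fin d → ℝ), Function.Injective w →
        IsUnit (maternMat α d w).det →
        ∀ k : Fin d → ℕ, (∑ j, k j) = lbelow α →
          ∀ x h : Fin d → ℝ, 0 < nrm h → nrm h ≤ δ →
            (¬ IsNatVal α →
              |mder2 d k k (condK α d w) x x - mder2 d k k (condK α d w) x (x + h) -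
                  mder2 d k k (condK α d w) (x + h) x +
                  mder2 d k k (condK α d w) (x + h) (x + h)| ≤
                C * nrm h ^ (2 * (α - (lbelow α : ℝ)))) ∧
            (IsNatVal α →
              |mder2 d k k (condK α d w) x x - mder2 d k k (condK α d w) x (x + h) -
                  mder2 d k k (condK α d w) (x + h) x +
                  mder2 d k k (condK α d w) (x + h) (x + h)| ≤
                C * (nrm h ^ (2 : ℕ) * Real.log (1 / nrm h))) := by
  have hβ := sub_pos.2 (lbelow_lt hα)
  set β := α - (lbelow α : ℝ)
  set A := d * volume.real (Metric.ball (0 : Fin d → ℝ) 1)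
  have hA0 : 0 ≤ A := by positivity
  have main : ∀ (n : ℕ) (w : Fin n → Fin d → ℝ), IsUnit (maternMat α d w).det →
      ∀ k : Fin d → ℕ, (∑ j, k j) = lbelow α → ∀ x h : Fin d → ℝ, 0 < nrm h → nrm h ≤ 1 / 2 →
      |mder2 d k k (condK α d w) x x - mder2 d k k (condK α d w) x (x + h) -
          mder2 d k k (condK α d w) (x + h) x +
          mder2 d k k (condK α d w) (x + h) (x + h)| ≤
        A * ((d : ℝ) ^ 2 * nrm h ^ 2 * (1 + ∫ y in (1 : ℝ)..(nrm h)⁻¹, y ^ (1 - 2 * β)) +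
          2 / β * nrm h ^ (2 * β)) := by
    intro n w hdet k hk x h h0 h1
    have hkα : ((∑ j, k j : ℕ) : ℝ) < α := by rw [hk]; exact lbelow_lt hα
    refine (abs_second_difference_condK_le (matern_eq_integral_phase α d) w hdet k
      (integrable_moment_maternMeasure hα hkα) x (x + h)).trans ?_
    refine (integral_symbol_phase_sub_le hα hd k hkα x h).trans ?_
    rw [hk]
    exact mul_le_mul_of_nonneg_left
      (integral_radialBound_le hβ (sq_nonneg _) h0 (by linarith)) hA0
  by_cases hnat : IsNatVal α
  · have hβ1 : β = 1 := sub_lbelow_eq_one hα hnat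
    refine ⟨A * (3 * (d : ℝ) ^ 2 + 4) + 1, by positivity, 1 / 2, by norm_num, by norm_num, ?_⟩
    intro n w _ hdet k hk x h h0 h1
    refine ⟨fun hn => absurd hnat hn, fun _ => (main n w hdet k hk x h h0 h1).trans ?_⟩
    rw [hβ1]
    refine (mul_le_mul_of_nonneg_left
      (radial_estimate_one _ (sq_nonneg (d : ℝ)) h0 h1) hA0).trans ?_
    have hlog : 0 ≤ Real.log (1 / nrm h) :=
      Real.log_nonneg (by rw [le_div_iff₀ h0]; linarith)
    rw [← mul_assoc]
    gcongr
    linarith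
  · have hβ1 : β < 1 := sub_lbelow_lt_one hα hnat
    have hb : 0 < 2 - 2 * β := by linarith
    refine ⟨A * ((d : ℝ) ^ 2 * (1 + 1 / (2 - 2 * β)) + 2 / β) + 1, by positivity, 1 / 2,
      by norm_num, by norm_num, ?_⟩
    intro n w _ hdet k hk x h h0 h1
    refine ⟨fun _ => (main n w hdet k hk x h h0 h1).trans ?_, fun hn => absurd hn hnat⟩
    refine (mul_le_mul_of_nonneg_left
      (radial_estimate_of_lt_one _ (sq_nonneg (d : ℝ)) hβ1 h0 (by linarith)) hA0).trans ?_
    rw [← mul_assoc]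
    gcongr
    linarith
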